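/- Let F denote the Fibonacci sequence with F_1 = F_2 = 1, and let h' : ℤ × ℤ → ℤ × ℤ be the map h'(m,n) = (2m−n, n−m). For coprime integers n > m ≥ 1, there exists a natural number i such that the i-th iterate of h' applied to (m,n) equals (1,1) or (1,2) if and only if there exists an integer j ≥ 1 with (m,n) = (F_j, F_{j+1}). -/

import Mathlib

/-!
The map `h'` is the inverse square of the Fibonacci shift `(a, b) ↦ (b, a + b)`, and `(1, 1)` and
`(1, 2)` are the first two images of `(0, 1)` under this shift. The pairs which `h'` carries to
`(1, 1)` or `(1, 2)` are therefore the images of `(0, 1)` under the odd, respectively the positive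
even, powers of the shift; together these are all the Fibonacci pairs of positive index.
-/

/-- The Fibonacci shift `(a, b) ↦ (b, a + b)`, which advances two consecutive terms of a Fibonacci
recurrence by one index. It is bundled as a permutation so that it can be run backwards. -/
@[simps]
def fibShift (M : Type*) [AddCommGroup M] : Equiv.Perm (M × M) where
  toFun p := (p.2, p.1 + p.2)
  invFun p := (p.2 - p.1, p.1)
  left_inv p := by simp
  right_inv p := by simp

/-- The arithmetic reduction `h'` taking the `(m, n)` loop curve to the isotopic
`(2m - n, n - m)` loop curve, with coefficients in an arbitrary ring. -/
def loopReduction {R : Type*} [NonAssocRing R] (p : R × R) : R × R :=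
  (2 * p.1 - p.2, p.2 - p.1)

theorem fibShift_pow_zero_one (R : Type*) [AddCommGroupWithOne R] (j : ℕ) :
    (fibShift R ^ j) (0, 1) = ((Nat.fib j : R), (Nat.fib (j + 1) : R)) := by
  induction j with
  | zero => simp
  | succ j ih =>
    rw [pow_succ', Equiv.Perm.mul_apply, ih, fibShift_apply, Nat.fib_add_two, Nat.cast_add]

theorem exists_odd_or_even_iff_exists_one_le (P : ℕ → Prop) :
    (∃ i, P (2 * i + 1) ∨ P (2 * i + 2)) ↔ ∃ j, 1 ≤ j ∧ P j := by
  constructor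
  · rintro ⟨i, hodd | heven⟩
    · exact ⟨2 * i + 1, by lia, hodd⟩
    · exact ⟨2 * i + 2, by lia, heven⟩
  · rintro ⟨j, hpos, hj⟩
    obtain ⟨k, rfl⟩ := Nat.exists_eq_add_of_le' hpos
    obtain ⟨i, rfl | rfl⟩ := Nat.even_or_odd' k
    · exact ⟨i, Or.inl hj⟩
    · exact ⟨i, Or.inr hj⟩

section LoopReduction

variable {R : Type*} [NonAssocRing R]

theorem loopReduction_eq_inv_fibShift_sq :
    (loopReduction : R × R → R × R) = ⇑(fibShift R ^ 2)⁻¹ := by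
  funext p
  rw [Equiv.Perm.eq_inv_iff_eq, pow_two, Equiv.Perm.mul_apply]
  ext <;> simp only [loopReduction, fibShift_apply, two_mul] <;> abel

theorem loopReduction_iterate_eq_iff (i : ℕ) (p q : R × R) :
    loopReduction^[i] p = q ↔ p = (fibShift R ^ (2 * i)) q := by
  rw [loopReduction_eq_inv_fibShift_sq, Equiv.Perm.iterate_eq_pow, inv_pow, ← pow_mul,
    Equiv.Perm.inv_eq_iff_eq]

theorem loopReduction_iterate_eq_fib_iff (i k : ℕ) (p : R × R) :
    loopReduction^[i] p = ((Nat.fib k : R), (Nat.fib (k + 1) : R)) ↔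
      p = ((Nat.fib (2 * i + k) : R), (Nat.fib (2 * i + k + 1) : R)) := by
  rw [loopReduction_iterate_eq_iff, ← fibShift_pow_zero_one, ← Equiv.Perm.mul_apply, ← pow_add,
    fibShift_pow_zero_one]

theorem stmt_6_general (m n : R) :
    (∃ i : ℕ, loopReduction^[i] (m, n) = (1, 1) ∨ loopReduction^[i] (m, n) = (1, 2)) ↔
      ∃ j : ℕ, 1 ≤ j ∧ (m, n) = ((Nat.fib j : R), (Nat.fib (j + 1) : R)) := by
  have one_one : ((1, 1) : R × R) = ((Nat.fib 1 : R), (Nat.fib (1 + 1) : R)) := by simp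
  have one_two : ((1, 2) : R × R) = ((Nat.fib 2 : R), (Nat.fib (2 + 1) : R)) := by
    simp [Nat.fib_add_two, one_add_one_eq_two]
  simp only [one_one, one_two, loopReduction_iterate_eq_fib_iff]
  exact exists_odd_or_even_iff_exists_one_le
    fun j ↦ (m, n) = ((Nat.fib j : R), (Nat.fib (j + 1) : R))

end LoopReduction

/-- For coprime integers `n > m ≥ 1`, some iterate of `h'(m,n) = (2m-n, n-m)`
reaches `(1,1)` or `(1,2)` iff `(m,n)` is a Fibonacci pair `(F j, F (j+1))`, `j ≥ 1`. -/
theorem stmt_6 (m n : ℤ) (hnm : n > m) (hm : m ≥ 1) (hcop : IsCoprime m n) :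
    (∃ i : ℕ,
        (fun p : ℤ × ℤ => (2 * p.1 - p.2, p.2 - p.1))^[i] (m, n) = (1, 1) ∨
        (fun p : ℤ × ℤ => (2 * p.1 - p.2, p.2 - p.1))^[i] (m, n) = (1, 2)) ↔
      ∃ j : ℕ, 1 ≤ j ∧ (m, n) = ((Nat.fib j : ℤ), (Nat.fib (j + 1) : ℤ)) :=
  stmt_6_general m n
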